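/- arXiv:1005.3598 — 5 statements merged into one kernel-verified Lean document; each statement's English description precedes it below -/
import Mathlib

section
/- (Lemma 4.1) With the parameters and polynomials v_0, …, v_7 defined in the context, the following identity holds in ℝ[X]: m·c2·c3·c5·v_7 = (X^3 − a2·X^2 − (m + c2·(m−1))·X + m·a2 − a5·c3) · (X^2 + c2·X − m) · (X − m) · (X + 1). -/
/-!
Evaluate at a point `x` and multiply each step of the recurrence by its leading coefficient, so that
the values `V i` satisfy `c (i+1) * V (i+1) = (x - a i) * V i - b (i-1) * V (i-1)` without division.
Unrolling from `V 7` downwards, `m * c2 * c3 * c5 * V 7` becomes a combination of `V 1` and `V 0`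
with coefficients polynomial in `x` and the parameters. Once `b3`, `b4` and the `a i` are expressed
in `m`, `c2`, `c3`, `c5`, the factorization is a polynomial identity. Since `ℝ` is infinite,
agreement at every point gives equality in `ℝ[X]`.
-/

open Polynomial

/-- Lemma 4.1: factorization of m·c2·c3·c5·v₇. -/
theorem factorization_of_v7
    (m c2 c3 c5 b3 b4 a2 a4 a5 : ℝ)
    (hm : m ≠ 0) (hc2 : c2 ≠ 0) (hc3 : c3 ≠ 0) (hc5 : c5 ≠ 0)
    (ha2 : a2 = m - 1 - c2) (ha4 : a4 = m - 1 - b4) (ha5 : a5 = m - 1 - c5)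
    (hc3b3 : c3 = m - b3) (haa : a2 = a4 + a5)
    (b c a : ℕ → ℝ)
    (hb : b 0 = m ∧ b 1 = m - 1 ∧ b 2 = 1 ∧ b 3 = b3 ∧ b 4 = b4 ∧ b 5 = 1 ∧ b 6 = 0)
    (hc : c 1 = 1 ∧ c 2 = c2 ∧ c 3 = c3 ∧ c 4 = 1 ∧ c 5 = c5 ∧ c 6 = m ∧ c 7 = 1)
    (ha : a 0 = 0 ∧ ∀ j : ℕ, 1 ≤ j → j ≤ 6 → a j = m - b j - c j)
    (v : ℕ → Polynomial ℝ)
    (hv0 : v 0 = 1) (hv1 : v 1 = Polynomial.X)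
    (hv : ∀ i : ℕ, 1 ≤ i → i ≤ 6 →
      v (i + 1) = (c (i + 1))⁻¹ •
        ((Polynomial.X - Polynomial.C (a i)) * v i - Polynomial.C (b (i - 1)) * v (i - 1))) :
    C (m * c2 * c3 * c5) * v 7 =
      (X ^ 3 - C a2 * X ^ 2 - C (m + c2 * (m - 1)) * X + C (m * a2 - a5 * c3)) *
        (X ^ 2 + C c2 * X - C m) * (X - C m) * (X + 1) := by
  obtain ⟨hb0, hb1, hb2, hb3, hb4, hb5, hb6⟩ := hb
  obtain ⟨hc1, hcc2, hcc3, hc4, hcc5, hc6, hc7⟩ := hc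
  obtain ⟨-, ha⟩ := ha
  have e3 : b3 = m - c3 := by linarith
  have e4 : b4 = m - 1 + c2 - c5 := by linarith
  refine Polynomial.funext fun x => ?_
  have key : ∀ i : ℕ, 1 ≤ i → i ≤ 6 → c (i + 1) ≠ 0 →
      c (i + 1) * (v (i + 1)).eval x =
        (x - (m - b i - c i)) * (v i).eval x - b (i - 1) * (v (i - 1)).eval x := by
    intro i h1 h6 hne
    rw [hv i h1 h6, ha i h1 h6, eval_smul, smul_eq_mul, mul_inv_cancel_left₀ hne]
    simp only [eval_sub, eval_mul, eval_X, eval_C]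
  have h2 := key 1 (by norm_num) (by norm_num) (by simpa [hcc2] using hc2)
  have h3 := key 2 (by norm_num) (by norm_num) (by simpa [hcc3] using hc3)
  have h4 := key 3 (by norm_num) (by norm_num) (by simp [hc4])
  have h5 := key 4 (by norm_num) (by norm_num) (by simpa [hcc5] using hc5)
  have h6 := key 5 (by norm_num) (by norm_num) (by simpa [hc6] using hm)
  have h7 := key 6 (by norm_num) (by norm_num) (by simp [hc7])
  norm_num only [hb0, hb1, hb2, hb3, hb4, hb5, hb6, hc1, hcc2, hcc3, hc4, hcc5, hc6, hc7,
    hv0, hv1, eval_one, eval_X] at h2 h3 h4 h5 h6 h7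
  simp only [eval_mul, eval_add, eval_sub, eval_pow, eval_X, eval_C, eval_one]
  clear key hv ha
  subst e3 e4 ha2 ha4 ha5
  -- `q5`, `q4`, `q3` are the coefficients of `V 5`, `V 4`, `V 3` when `V 7` is unrolled downwards,
  -- with the denominators `m`, `c5` and then `c2 * c3` cleared.
  obtain ⟨q5, hq5⟩ : ∃ q, q = x * (x - (m - 1 - c5)) - m := ⟨_, rfl⟩
  obtain ⟨q4, hq4⟩ : ∃ q, q = q5 * (x - (c5 - c2)) - c5 * x * (m - 1 + c2 - c5) := ⟨_, rfl⟩
  obtain ⟨q3, hq3⟩ : ∃ q, q = q4 * x - q5 * (m - c3) := ⟨_, rfl⟩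
  linear_combination (norm := (subst hq3 hq4 hq5; ring))
    m * c2 * c3 * c5 * h7 + c2 * c3 * c5 * x * h6 + c2 * c3 * q5 * h5 + c2 * c3 * q4 * h4 +
      c2 * q3 * h3 + (q3 * (x - (m - 1 - c2)) - c3 * q4) * h2
end

section
/- (Key identity in the proof of Lemma 4.1) With the parameters and polynomials v_0, …, v_7 defined in the context, the following identity holds in ℝ[X]: m·c5·v_7 = (c2·v_3 − a5) · (c3·X·v_3 − m·v_2). -/
/-!
Write `p = v 3` and `q = v 2`. After clearing denominators the recurrence reads `c2 q = X² - m`,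
`c3 p = (X - a2) q - (m - 1) X`, `v 4 = X p - q`, and three further relations that express
`m c5 (v 7)` as a combination of `v 4` and `p`. Eliminating with these relations reduces the
difference of the two sides to `K (X² p - X q)` with `K = c2 (m - 1) + a4 a5 - c5 b4`, and `K = 0`
since `c2 = m - 1 - a4 - a5`, `c5 = m - 1 - a5` and `b4 = m - 1 - a4`. The elimination uses only
ring operations, so `key_identity_ring` states it over an arbitrary commutative ring.
-/

open Polynomial

/-- The division-free form of the identity: the parameters are ring elements, with `a2`, `b3`, `b4`,
`c2`, `c5` eliminated in favour of `m`, `c3`, `a4`, `a5`. -/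
theorem key_identity_ring {R : Type*} [CommRing R] (m c3 a4 a5 x v2 v3 v4 v5 v6 v7 : R)
    (h2 : (m - 1 - a4 - a5) * v2 = x ^ 2 - m)
    (h3 : c3 * v3 = (x - (a4 + a5)) * v2 - (m - 1) * x)
    (h4 : v4 = x * v3 - v2)
    (h5 : (m - 1 - a5) * v5 = (x - a4) * v4 - (m - c3) * v3)
    (h6 : m * v6 = (x - a5) * v5 - (m - 1 - a4) * v4)
    (h7 : v7 = x * v6 - v5) :
    m * (m - 1 - a5) * v7 =
      ((m - 1 - a4 - a5) * v3 - a5) * (c3 * x * v3 - m * v2) := by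
  linear_combination m * (m - 1 - a5) * h7 + (m - 1 - a5) * x * h6
    + (x ^ 2 - a5 * x - m) * h5
    + ((x ^ 2 - a5 * x - m) * (x - a4) - x * (m - 1 - a5) * (m - 1 - a4)) * h4
    + (m - 1 - a4 - a5) * (v2 - x * v3) * h3
    + (a5 * x * v3 - a5 * v2 - ((x - a4) * (x * v3 - v2) - (m - c3) * v3)) * h2

/-- Clears the leading coefficient of a three-term recurrence. -/
theorem C_mul_eq_of_eq_inv_smul {r : ℝ} (hr : r ≠ 0) {p q : ℝ[X]} (h : p = r⁻¹ • q) :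
    C r * p = q := by
  rw [h, ← smul_eq_C_mul, smul_inv_smul₀ hr]

/-- Key identity in the proof of Lemma 4.1: m·c5·v₇ = (c2·v₃ − a5)(c3·X·v₃ − m·v₂). -/
theorem v7_key_identity
    (m c2 c3 c5 b3 b4 a2 a4 a5 : ℝ)
    (hm : m ≠ 0) (hc2 : c2 ≠ 0) (hc3 : c3 ≠ 0) (hc5 : c5 ≠ 0)
    (ha2 : a2 = m - 1 - c2) (ha4 : a4 = m - 1 - b4) (ha5 : a5 = m - 1 - c5)
    (hc3b3 : c3 = m - b3) (haa : a2 = a4 + a5)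
    (b c a : ℕ → ℝ)
    (hb : b 0 = m ∧ b 1 = m - 1 ∧ b 2 = 1 ∧ b 3 = b3 ∧ b 4 = b4 ∧ b 5 = 1 ∧ b 6 = 0)
    (hc : c 1 = 1 ∧ c 2 = c2 ∧ c 3 = c3 ∧ c 4 = 1 ∧ c 5 = c5 ∧ c 6 = m ∧ c 7 = 1)
    (ha : a 0 = 0 ∧ ∀ j : ℕ, 1 ≤ j → j ≤ 6 → a j = m - b j - c j)
    (v : ℕ → Polynomial ℝ)
    (hv0 : v 0 = 1) (hv1 : v 1 = Polynomial.X)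
    (hv : ∀ i : ℕ, 1 ≤ i → i ≤ 6 →
      v (i + 1) = (c (i + 1))⁻¹ •
        ((Polynomial.X - Polynomial.C (a i)) * v i - Polynomial.C (b (i - 1)) * v (i - 1))) :
    C (m * c5) * v 7 = (C c2 * v 3 - C a5) * (C c3 * X * v 3 - C m * v 2) := by
  obtain ⟨hb0, hb1, hb2, hb3, hb4, hb5, hb6⟩ := hb
  obtain ⟨hc1, hc2', hc3', hc4, hc5', hc6, hc7⟩ := hc
  obtain ⟨-, ha⟩ := ha
  have e1 : a 1 = 0 := by rw [ha 1 (by norm_num) (by norm_num), hb1, hc1]; ring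
  have e2 : a 2 = a4 + a5 := by
    rw [ha 2 (by norm_num) (by norm_num), hb2, hc2', ← haa, ha2]
  have e3 : a 3 = 0 := by rw [ha 3 (by norm_num) (by norm_num), hb3, hc3', hc3b3]; ring
  have e4 : a 4 = a4 := by rw [ha 4 (by norm_num) (by norm_num), hb4, hc4, ha4]; ring
  have e5 : a 5 = a5 := by rw [ha 5 (by norm_num) (by norm_num), hb5, hc5', ha5]
  have e6 : a 6 = 0 := by rw [ha 6 (by norm_num) (by norm_num), hb6, hc6]; ring
  have k2 : c2 = m - 1 - a4 - a5 := by linarith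
  have k3 : b3 = m - c3 := by linarith
  have k4 : b4 = m - 1 - a4 := by linarith
  have k5 : c5 = m - 1 - a5 := by linarith
  have h2 := C_mul_eq_of_eq_inv_smul (by rwa [hc2']) (hv 1 (by norm_num) (by norm_num))
  have h3 := C_mul_eq_of_eq_inv_smul (by rwa [hc3']) (hv 2 (by norm_num) (by norm_num))
  have h4 := C_mul_eq_of_eq_inv_smul (by simp [hc4]) (hv 3 (by norm_num) (by norm_num))
  have h5 := C_mul_eq_of_eq_inv_smul (by rwa [hc5']) (hv 4 (by norm_num) (by norm_num))
  have h6 := C_mul_eq_of_eq_inv_smul (by rwa [hc6]) (hv 5 (by norm_num) (by norm_num))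
  have h7 := C_mul_eq_of_eq_inv_smul (by simp [hc7]) (hv 6 (by norm_num) (by norm_num))
  norm_num only [hc2', hc3', hc4, hc5', hc6, hc7, e1, e2, e3, e4, e5, e6, hb0, hb1, hb2, hb3, hb4,
    hb5, hv0, hv1, k2, k3, k4, k5, C_sub, C_add, C_1, C_0] at h2 h3 h4 h5 h6 h7
  have key := key_identity_ring (C m) (C c3) (C a4) (C a5) X (v 2) (v 3) (v 4) (v 5) (v 6) (v 7)
    (by linear_combination h2) (by linear_combination h3) (by linear_combination h4)
    (by linear_combination h5) (by linear_combination h6) (by linear_combination h7)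
  rw [k2, k5]
  simpa only [C_mul, C_sub, C_1] using key
end

section
/- (Rows 1–3 of the eigenmatrix Q) With the parameters defined in the context, suppose the real number x satisfies x^3 − a2·x^2 − (m + c2·(m−1))·x + m·a2 − a5·c3 = 0. Define u_0 = 1, u_1 = x, u_2 = (x^2 − m)/c2, u_3 = a5/c2, u_4 = −(x^2 − a5·x − m)/c2, u_5 = −b4·x/c2, u_6 = −b4/c2, and set u_{−1} = u_7 = 0. Then for every j with 0 ≤ j ≤ 6: x·u_j = b_{j−1}·u_{j−1} + a_j·u_j + c_{j+1}·u_{j+1} (with b_{−1} := 0). -/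
/-!
After clearing the common denominator `c2`, each of the seven relations is a polynomial identity.
Those for `j = 0, 1, 3, 5, 6` hold for every `x`, given `a 0 = a 1 = a 3 = a 6 = 0`. The relation
for `j = 2` is exactly the cubic equation for `x`. The relation for `j = 4` is the same cubic:
its coefficients agree because `a2 = a4 + a5`, `c3 = m - b3` and
`a4 * a5 - c5 * b4 = -(c2 * (m - 1))`, the last being a consequence of `a2 = a4 + a5`.
-/


/-- Rows 1–3 of the eigenmatrix Q: the vector u is an eigenvector of B₁* with
eigenvalue x, for x a root of the cubic factor. -/
theorem eigenmatrix_rows_one_to_three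
    (m c2 c3 c5 b3 b4 a2 a4 a5 : ℝ)
    (hm : m ≠ 0) (hc2 : c2 ≠ 0) (hc3 : c3 ≠ 0) (hc5 : c5 ≠ 0)
    (ha2 : a2 = m - 1 - c2) (ha4 : a4 = m - 1 - b4) (ha5 : a5 = m - 1 - c5)
    (hc3b3 : c3 = m - b3) (haa : a2 = a4 + a5)
    (b c a : ℤ → ℝ)
    (hb : b (-1) = 0 ∧ b 0 = m ∧ b 1 = m - 1 ∧ b 2 = 1 ∧ b 3 = b3 ∧ b 4 = b4 ∧
      b 5 = 1 ∧ b 6 = 0)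
    (hc : c 1 = 1 ∧ c 2 = c2 ∧ c 3 = c3 ∧ c 4 = 1 ∧ c 5 = c5 ∧ c 6 = m ∧ c 7 = 1)
    (ha : a 0 = 0 ∧ ∀ j : ℤ, 1 ≤ j → j ≤ 6 → a j = m - b j - c j)
    (x : ℝ)
    (hx : x ^ 3 - a2 * x ^ 2 - (m + c2 * (m - 1)) * x + m * a2 - a5 * c3 = 0)
    (u : ℤ → ℝ)
    (hu : u (-1) = 0 ∧ u 0 = 1 ∧ u 1 = x ∧ u 2 = (x ^ 2 - m) / c2 ∧ u 3 = a5 / c2 ∧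
      u 4 = -(x ^ 2 - a5 * x - m) / c2 ∧ u 5 = -(b4 * x) / c2 ∧ u 6 = -b4 / c2 ∧
      u 7 = 0) :
    ∀ j : ℤ, 0 ≤ j → j ≤ 6 →
      x * u j = b (j - 1) * u (j - 1) + a j * u j + c (j + 1) * u (j + 1) := by
  obtain ⟨hbm, hb0, hb1, hb2, hb3, hb4, hb5, hb6⟩ := hb
  obtain ⟨hc1, hcc2, hcc3, hc4, hcc5, hc6, -⟩ := hc
  obtain ⟨ha0, ha⟩ := ha
  obtain ⟨-, hu0, hu1, hu2, hu3, hu4, hu5, hu6, hu7⟩ := hu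
  have ha1 : a 1 = 0 := by rw [ha 1 (by norm_num) (by norm_num), hb1, hc1]; ring
  have haa2 : a 2 = a2 := by rw [ha 2 (by norm_num) (by norm_num), hb2, hcc2, ha2]
  have ha3 : a 3 = 0 := by rw [ha 3 (by norm_num) (by norm_num), hb3, hcc3, hc3b3]; ring
  have haa4 : a 4 = a4 := by rw [ha 4 (by norm_num) (by norm_num), hb4, hc4, ha4]; ring
  have haa5 : a 5 = a5 := by rw [ha 5 (by norm_num) (by norm_num), hb5, hcc5, ha5]
  have ha6 : a 6 = 0 := by rw [ha 6 (by norm_num) (by norm_num), hb6, hc6]; ring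
  -- The linear coefficient of the `j = 4` relation, rewritten in terms of `c2`.
  have key : a4 * a5 - c5 * b4 = -(c2 * (m - 1)) := by
    have h : c2 = b4 + c5 - (m - 1) := by linarith
    rw [h, ha4, ha5]; ring
  intro j hj0 hj6
  interval_cases j <;> norm_num only
  · rw [hu0, hu1, ha0, hc1, show b (-1) * u (-1) = 0 by simp [*]]; ring
  · rw [hu0, hu1, hu2, hb0, ha1, hcc2]; field_simp; ring
  · rw [hu1, hu2, hu3, hb1, haa2, hcc3]; field_simp; linear_combination hx
  · rw [hu2, hu3, hu4, hb2, ha3, hc4]; field_simp; ring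
  · rw [hu3, hu4, hu5, hb3, haa4, hcc5]; field_simp
    linear_combination -hx - x * key + (m - x ^ 2) * haa - a5 * hc3b3
  · rw [hu4, hu5, hu6, hb4, haa5, hc6]; field_simp; ring
  · rw [hu5, hu6, hu7, hb5, ha6]; ring
end

section
/- (Rows 4–5 of the eigenmatrix Q) With the parameters defined in the context, suppose the real number x satisfies x^2 + c2·x − m = 0. Define u_0 = 1, u_1 = x, u_2 = −x, u_3 = −m/c3, u_4 = −b3·x/c3, u_5 = b3·x/c3, u_6 = b3/c3, and set u_{−1} = u_7 = 0. Then for every j with 0 ≤ j ≤ 6: x·u_j = b_{j−1}·u_{j−1} + a_j·u_j + c_{j+1}·u_{j+1} (with b_{−1} := 0). -/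
/-!
Each of the seven relations is a rational identity in the parameters. Rows 0, 3 and 6 hold for every
`x` (row 3 because `c3 + b3 = m`), while rows 1, 2, 4 and 5 are, after clearing `c3`, multiples of
`x ^ 2 + c2 * x - m`. For rows 4 and 5 this uses `a2 = a4 + a5`, i.e. `b4 + c5 = m - 1 + c2`.
-/


/-- Rows 4–5 of the eigenmatrix Q: the vector u is an eigenvector of B₁* with
eigenvalue x, for x a root of x² + c2·x − m. -/
theorem eigenmatrix_rows_four_to_five
    (m c2 c3 c5 b3 b4 a2 a4 a5 : ℝ)
    (hm : m ≠ 0) (hc2 : c2 ≠ 0) (hc3 : c3 ≠ 0) (hc5 : c5 ≠ 0)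
    (ha2 : a2 = m - 1 - c2) (ha4 : a4 = m - 1 - b4) (ha5 : a5 = m - 1 - c5)
    (hc3b3 : c3 = m - b3) (haa : a2 = a4 + a5)
    (b c a : ℤ → ℝ)
    (hb : b (-1) = 0 ∧ b 0 = m ∧ b 1 = m - 1 ∧ b 2 = 1 ∧ b 3 = b3 ∧ b 4 = b4 ∧
      b 5 = 1 ∧ b 6 = 0)
    (hc : c 1 = 1 ∧ c 2 = c2 ∧ c 3 = c3 ∧ c 4 = 1 ∧ c 5 = c5 ∧ c 6 = m ∧ c 7 = 1)
    (ha : a 0 = 0 ∧ ∀ j : ℤ, 1 ≤ j → j ≤ 6 → a j = m - b j - c j)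
    (x : ℝ) (hx : x ^ 2 + c2 * x - m = 0)
    (u : ℤ → ℝ)
    (hu : u (-1) = 0 ∧ u 0 = 1 ∧ u 1 = x ∧ u 2 = -x ∧ u 3 = -m / c3 ∧
      u 4 = -(b3 * x) / c3 ∧ u 5 = b3 * x / c3 ∧ u 6 = b3 / c3 ∧ u 7 = 0) :
    ∀ j : ℤ, 0 ≤ j → j ≤ 6 →
      x * u j = b (j - 1) * u (j - 1) + a j * u j + c (j + 1) * u (j + 1) := by
  obtain ⟨hbm, hb0, hb1, hb2, hb3, hb4, hb5, hb6⟩ := hb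
  obtain ⟨hk1, hk2, hk3, hk4, hk5, hk6, hk7⟩ := hc
  obtain ⟨ha0, haj⟩ := ha
  obtain ⟨hum, hu0, hu1, hu2, hu3, hu4, hu5, hu6, hu7⟩ := hu
  have h1 := haj 1 (by norm_num) (by norm_num)
  have h2 := haj 2 (by norm_num) (by norm_num)
  have h3 := haj 3 (by norm_num) (by norm_num)
  have h4 := haj 4 (by norm_num) (by norm_num)
  have h5 := haj 5 (by norm_num) (by norm_num)
  have h6 := haj 6 (by norm_num) (by norm_num)
  -- `a2 = a4 + a5` in terms of the Krein parameters: it makes rows 4 and 5 multiples of the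
  -- quadratic satisfied by `x`.
  have hkey : b4 = m - 1 + c2 - c5 := by linarith
  have hb3c : b3 = m - c3 := by linarith
  intro j hj0 hj6
  interval_cases j <;> norm_num
  · rw [hu0, hu1, ha0, hk1]; simp [hbm]
  · rw [h1, hb0, hb1, hk1, hk2, hu0, hu1, hu2]; linear_combination hx
  · rw [h2, hb1, hb2, hk2, hk3, hu1, hu2, hu3]; field_simp; linear_combination -hx
  · rw [h3, hb2, hb3, hk3, hk4, hu2, hu3, hu4, hb3c]; field_simp; ring
  · rw [h4, hb3, hb4, hk4, hk5, hu3, hu4, hu5, hkey]; field_simp; linear_combination -b3 * hx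
  · rw [h5, hb4, hb5, hk5, hk6, hu4, hu5, hu6, hkey]; field_simp; linear_combination b3 * hx
  · rw [h6, hb5, hb6, hk6, hk7, hu5, hu6, hu7]; ring
end

section
/- Let m, c2, a5, c3, x1 be real numbers with m ≥ 3, 0 < c2 ≤ m − 1, a5 ≥ 0, c3 > 0, and set a2 = m − 1 − c2. Assume m·a2 − a5·c3 ≥ 0, m − 1 < x1 < m, x1^3 − a2·x1^2 − (m + c2·(m−1))·x1 + m·a2 − a5·c3 = 0, and 3·x1^2 − 2·a2·x1 − m − c2·(m−1) > 0. Then (m+1)·(x1^2 − a2·x1 − c2·(m−1)) < 2·(3·x1^2 − 2·a2·x1 − m − c2·(m−1)). -/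
/-- The quantity p₁₆¹ + 1 is less than 2 under the stated constraints. -/
theorem p161_plus_one_lt_two
    (m c2 a5 c3 x1 a2 : ℝ)
    (hm : m ≥ 3) (hc2 : 0 < c2) (hc2' : c2 ≤ m - 1) (ha5 : a5 ≥ 0) (hc3 : c3 > 0)
    (ha2 : a2 = m - 1 - c2)
    (hnum : m * a2 - a5 * c3 ≥ 0)
    (hx1 : m - 1 < x1) (hx1' : x1 < m)
    (hroot : x1 ^ 3 - a2 * x1 ^ 2 - (m + c2 * (m - 1)) * x1 + m * a2 - a5 * c3 = 0)
    (hden : 3 * x1 ^ 2 - 2 * a2 * x1 - m - c2 * (m - 1) > 0) :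
    (m + 1) * (x1 ^ 2 - a2 * x1 - c2 * (m - 1)) <
      2 * (3 * x1 ^ 2 - 2 * a2 * x1 - m - c2 * (m - 1)) := by
  -- With `y = x1² - a2 x1 - c2 (m - 1)`, the cubic says `x1 (m - y) = m a2 - a5 c3`, which is
  -- nonnegative, so `y ≤ m`.
  have hy : x1 ^ 2 - a2 * x1 - c2 * (m - 1) ≤ m := by
    have h : 0 ≤ x1 * (m - (x1 ^ 2 - a2 * x1 - c2 * (m - 1))) := by linarith
    linarith [nonneg_of_mul_nonneg_right h (by linarith)]
  -- The right-hand side is `2 (x1² + 2 y + c2 (m - 1) - m)`, so the claim reads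
  -- `(m - 3) y < 2 x1² + 2 c2 (m - 1) - 2 m`. Bounding `y` by `m`, it remains to see that
  -- `m (m - 1) < 2 x1² + 2 c2 (m - 1)`, which holds because `2 x1² > 2 (m - 1)² ≥ m (m - 1)`.
  have h1 : (m - 3) * (x1 ^ 2 - a2 * x1 - c2 * (m - 1)) ≤ (m - 3) * m :=
    mul_le_mul_of_nonneg_left hy (by linarith)
  have h2 : (m - 1) ^ 2 < x1 ^ 2 := pow_lt_pow_left₀ hx1 (by linarith) (by norm_num)
  have h3 : 0 < c2 * (m - 1) := mul_pos hc2 (by linarith)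
  have h4 : 0 ≤ (m - 1) * (m - 2) := mul_nonneg (by linarith) (by linarith)
  linarith
end
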